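/- Let j ∈ ℕ and let f : ℂ → ℂ be holomorphic on the upper half-plane Π with ∫_Π |f|² dA < ∞. Define u : Π → ℂ by u(z) = ∑_{l=0}^{j} binom(j,l) · (z − conj z)^l · f^{(l)}(z) / l! (note z − conj z = 2i·Im z). Then ∫_Π |u(z)|² dA(z) = ∫_Π |f(z)|² dA(z). -/

import Mathlib

/-!
Write `y = Im z` and `φ_n(z) = y ^ n * f⁽ⁿ⁾(z)` (`wderiv`). Since `z - conj z = 2 i y`, the function
`S_Π^j f` is the combination `∑ l, C(j,l) / l! * (2i) ^ l * φ_l`, so its squared norm is a double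
sum of the pairings `⟨φ_k, φ_l⟩` in `L²(Π)` (`pairing`). These are computed by integration by parts.

* Every `φ_n` lies in `L²(Π)` (`memLp_weighted`). By Cauchy's formula on the circle of centre `z` and
  radius `y / 2`, `|φ_n(z)|²` is at most a constant times `∫ |f(z + (y/2) e^{iθ})|² dθ`. For fixed
  `θ` the map `z ↦ z + (y/2) e^{iθ}` is real-linear, preserves `Π`, and has determinant
  `1 + sin θ / 2 ≥ 1/2`, so integrating over `z` costs at most a factor `2`.
* The integral over `Π` of `∂ₓ(y φ_k conj φ_l)` vanishes, which gives
  `⟨φ_{k+1}, φ_l⟩ + ⟨φ_k, φ_{l+1}⟩ = 0` (`pairing_succ_add`); the integral of `∂_y(y φ_k conj φ_l)`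
  vanishes too, which gives `(k+l+1)⟨φ_k, φ_l⟩ + i⟨φ_{k+1}, φ_l⟩ - i⟨φ_k, φ_{l+1}⟩ = 0`
  (`pairing_euler`). Hence
  `(2i)^k conj((2i)^l) ⟨φ_k, φ_l⟩ = (-1)^(k+l) (k+l)! ‖f‖²` (`pairing_eq`).
* It remains to see that `∑ C(j,k) C(j,l) (-1)^(k+l) C(k+l,k) = 1` (`laguerre_sum`), the
  normalization of the `j`-th Laguerre polynomial. The inner sum is, up to sign, the `j`-th forward
  difference of `x ↦ C(x,k)`, which is `0` for `k < j` and `1` for `k = j`.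
-/

open Complex MeasureTheory Metric Set ENNReal

noncomputable section

/-- The upper half-plane `Π = {z : ℂ | Im z > 0}`. -/
def UHP : Set ℂ := {z : ℂ | 0 < z.im}

/-- The operator `S_Π^j` restricted to the Bergman space:
`(S_Π^j f)(z) = (1/j!) ∂^j[(z - conj z)^j f(z)] = ∑_{l=0}^{j} C(j,l) (z - conj z)^l f⁽ˡ⁾(z)/l!`. -/
def creationPow (j : ℕ) (f : ℂ → ℂ) (z : ℂ) : ℂ :=
  ∑ l ∈ Finset.range (j + 1),
    (j.choose l : ℂ) * (z - (starRingEnd ℂ) z) ^ l * iteratedDeriv l f z / (l.factorial : ℂ)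

/-! ### Derivatives of holomorphic functions on the half-plane -/

lemma isOpen_UHP : IsOpen UHP := isOpen_lt continuous_const Complex.continuous_im

lemma measurableSet_UHP : MeasurableSet UHP := isOpen_UHP.measurableSet

lemma analyticOnNhd_iteratedDeriv {f : ℂ → ℂ} (hf : DifferentiableOn ℂ f UHP) (n : ℕ) :
    AnalyticOnNhd ℂ (iteratedDeriv n f) UHP := by
  rw [iteratedDeriv_eq_iterate]
  exact (hf.analyticOnNhd isOpen_UHP).iterated_deriv n

lemma hasDerivAt_iteratedDeriv {f : ℂ → ℂ} (hf : DifferentiableOn ℂ f UHP) (n : ℕ) {z : ℂ}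
    (hz : z ∈ UHP) : HasDerivAt (iteratedDeriv n f) (iteratedDeriv (n + 1) f z) z := by
  rw [iteratedDeriv_succ]
  exact (analyticOnNhd_iteratedDeriv hf n z hz).differentiableAt.hasDerivAt

/-! ### Square integrability of the weighted derivatives -/

/-- Cauchy–Schwarz against the constant function `1`. -/
lemma sq_lintegral_le {α : Type*} [MeasurableSpace α] (μ : Measure α) {g : α → ℝ≥0∞}
    (hg : AEMeasurable g μ) : (∫⁻ a, g a ∂μ) ^ 2 ≤ μ univ * ∫⁻ a, g a ^ 2 ∂μ := by
  have h := ENNReal.lintegral_mul_le_Lp_mul_Lq μ (p := 2) (q := 2) Real.HolderConjugate.two_two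
    (f := fun _ => 1) (g := g) aemeasurable_const hg
  have h2 := pow_le_pow_left₀ (zero_le) h 2
  simp only [Pi.mul_apply, one_mul, ENNReal.one_rpow, lintegral_const, mul_pow] at h2
  have hhalf (a : ℝ≥0∞) : (a ^ (1 / 2 : ℝ)) ^ 2 = a := by
    rw [← ENNReal.rpow_natCast, ← ENNReal.rpow_mul]
    norm_num
  rw [hhalf, hhalf] at h2
  simpa only [ENNReal.rpow_ofNat] using h2

/-- The real-linear map `z ↦ z + (Im z / 2) e^{iθ}`. -/
def tilt (θ : ℝ) : ℂ →ₗ[ℝ] ℂ :=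
  LinearMap.id + Complex.imLm.smulRight (Complex.exp (θ * I) / 2)

lemma tilt_apply (θ : ℝ) (z : ℂ) : tilt θ z = circleMap z (z.im / 2) θ := by
  simp [tilt, circleMap]; ring

lemma im_tilt (θ : ℝ) (z : ℂ) : (tilt θ z).im = z.im * (1 + Real.sin θ / 2) := by
  simp [tilt, Complex.exp_mul_I, ← Complex.ofReal_cos, ← Complex.ofReal_sin]; ring

lemma det_tilt (θ : ℝ) : LinearMap.det (tilt θ) = 1 + Real.sin θ / 2 := by
  rw [← LinearMap.det_toMatrix Complex.basisOneI, Matrix.det_fin_two]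
  simp [LinearMap.toMatrix_apply, tilt, Complex.exp_mul_I, ← Complex.ofReal_cos,
    ← Complex.ofReal_sin]

lemma half_le_det (θ : ℝ) : 1 / 2 ≤ 1 + Real.sin θ / 2 := by
  linarith [Real.neg_one_le_sin θ]

/-- `tilt θ` maps `Π` onto itself and its determinant is at least `1/2`, so composing with it at
most doubles an integral over `Π`. -/
lemma lintegral_tilt_le (F : ℂ → ℝ≥0∞) (θ : ℝ) :
    ∫⁻ z in UHP, F (circleMap z (z.im / 2) θ) ≤ 2 * ∫⁻ z in UHP, F z := by
  have hdet := half_le_det θ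
  have h0 : LinearMap.det (tilt θ) ≠ 0 := by rw [det_tilt]; linarith
  have hemb : MeasurableEmbedding (tilt θ) :=
    ((LinearMap.equivOfDetNeZero (tilt θ) h0).toContinuousLinearEquiv.toHomeomorph).measurableEmbedding
  have hpre : tilt θ ⁻¹' UHP = UHP := by
    ext z
    simp only [UHP, mem_preimage, Set.mem_ofPred_eq, im_tilt]
    exact ⟨fun h => pos_of_mul_pos_left h (by linarith), fun h => mul_pos h (by linarith)⟩
  have hmap := Measure.map_linearMap_addHaar_eq_smul_addHaar (volume : Measure ℂ) h0
  have : ∫⁻ z in UHP, F (circleMap z (z.im / 2) θ)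
      = ENNReal.ofReal |(LinearMap.det (tilt θ))⁻¹| * ∫⁻ z in UHP, F z := by
    simp_rw [← tilt_apply]
    conv_lhs => rw [← hpre]
    rw [← hemb.lintegral_map, ← hemb.restrict_map, hmap, Measure.restrict_smul,
      lintegral_smul_measure, smul_eq_mul]
  rw [this]
  gcongr
  rw [det_tilt, abs_of_pos (inv_pos.2 (by linarith))]
  refine (ENNReal.ofReal_le_ofReal (inv_anti₀ (by norm_num) hdet)).trans ?_
  norm_num

lemma closedBall_subset_UHP {z : ℂ} (hz : z ∈ UHP) : closedBall z (z.im / 2) ⊆ UHP := by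
  intro w hw
  have hz' : 0 < z.im := hz
  have h1 := (Complex.abs_im_le_norm (w - z)).trans (mem_closedBall_iff_norm.1 hw)
  have h2 := (abs_le.1 h1).1
  rw [Complex.sub_im] at h2
  show 0 < w.im
  linarith

/-- Cauchy's formula for the `n`-th derivative on the circle of centre `z` and radius `Im z / 2`. -/
lemma enorm_le_circle {f : ℂ → ℂ} (hf : DifferentiableOn ℂ f UHP) (n : ℕ) {z : ℂ}
    (hz : z ∈ UHP) :
    ‖(z.im : ℂ) ^ n * iteratedDeriv n f z‖ₑ ≤ ENNReal.ofReal (2 ^ n * n.factorial / (2 * Real.pi)) *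
      ∫⁻ θ in Ioc 0 (2 * Real.pi), ‖f (circleMap z (z.im / 2) θ)‖ₑ := by
  have hz' : 0 < z.im := hz
  have hr : 0 < z.im / 2 := by positivity
  have hC := (hf.mono (closedBall_subset_UHP hz)).circleIntegral_one_div_sub_center_pow_smul hr n
  rw [circleIntegral, intervalIntegral.integral_of_le Real.two_pi_pos.le] at hC
  have hpi := Real.pi_pos
  -- The factor `(Im z / 2) ^ n` is kept inside, where it cancels the size of the Cauchy kernel.
  have key : (z.im : ℂ) ^ n * iteratedDeriv n f z =
      (2 ^ n * n.factorial / (2 * Real.pi) : ℝ) * ∫ θ in Ioc 0 (2 * Real.pi),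
        ((z.im / 2 : ℝ) : ℂ) ^ n * (-I) * (deriv (circleMap z (z.im / 2)) θ •
          (1 / (circleMap z (z.im / 2) θ - z) ^ (n + 1)) • f (circleMap z (z.im / 2) θ)) := by
    rw [integral_const_mul, hC]
    have : (Real.pi : ℂ) ≠ 0 := by exact_mod_cast hpi.ne'
    have : (n.factorial : ℂ) ≠ 0 := by exact_mod_cast n.factorial_ne_zero
    simp only [smul_eq_mul]
    push_cast
    field_simp
    rw [div_pow]
    field_simp
    simp
  rw [key, enorm_mul]
  gcongr
  · rw [← ofReal_norm, Complex.norm_real, Real.norm_of_nonneg (by positivity)]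
  · refine (enorm_integral_le_lintegral_enorm _).trans (lintegral_mono fun θ => ?_)
    rw [← ofReal_norm, ← ofReal_norm]
    apply ENNReal.ofReal_le_ofReal
    simp only [deriv_circleMap, circleMap_sub_center, norm_smul, norm_mul, norm_pow, one_div,
      norm_inv, norm_circleMap_zero, Complex.norm_real, norm_neg, norm_I, mul_one]
    rw [Real.norm_of_nonneg hr.le, abs_of_pos hr]
    apply le_of_eq
    field_simp
    ring

lemma continuousOn_circle {f : ℂ → ℂ} (hf : DifferentiableOn ℂ f UHP) :
    ContinuousOn (fun p : ℂ × ℝ => f (circleMap p.1 (p.1.im / 2) p.2)) (UHP ×ˢ univ) := by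
  refine hf.continuousOn.comp ?_ ?_
  · unfold circleMap
    fun_prop
  · rintro ⟨z, θ⟩ ⟨hz, -⟩
    exact closedBall_subset_UHP hz (circleMap_mem_closedBall _ (by have : 0 < z.im := hz; positivity) _)

lemma memLp_weighted {f : ℂ → ℂ} (hf : DifferentiableOn ℂ f UHP)
    (hf2 : IntegrableOn (fun z => ‖f z‖ ^ 2) UHP volume) (n : ℕ) :
    MemLp (fun z : ℂ => (z.im : ℂ) ^ n * iteratedDeriv n f z) 2 (volume.restrict UHP) := by
  have hcont : ContinuousOn (fun z : ℂ => (z.im : ℂ) ^ n * iteratedDeriv n f z) UHP :=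
    ContinuousOn.mul (by fun_prop) (analyticOnNhd_iteratedDeriv hf n).continuousOn
  refine ⟨hcont.aestronglyMeasurable measurableSet_UHP, ?_⟩
  have hfin : ∫⁻ z in UHP, ‖f z‖ₑ ^ 2 < ∞ := by
    have := hf2.2
    simpa [HasFiniteIntegral, enorm_pow] using this
  rw [eLpNorm_lt_top_iff_lintegral_rpow_enorm_lt_top (by norm_num) (by norm_num)]
  simp only [ENNReal.toReal_ofNat, ENNReal.rpow_ofNat]
  set C := ENNReal.ofReal (2 ^ n * n.factorial / (2 * Real.pi))
  set ν : Measure ℝ := volume.restrict (Ioc 0 (2 * Real.pi))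
  have hν : ν univ < ∞ := by
    simp only [ν, Measure.restrict_apply_univ]
    exact measure_Ioc_lt_top
  have hm : AEMeasurable (fun p : ℂ × ℝ => ‖f (circleMap p.1 (p.1.im / 2) p.2)‖ₑ ^ 2)
      ((volume.restrict UHP).prod ν) := by
    have h1 : AEMeasurable (fun p : ℂ × ℝ => f (circleMap p.1 (p.1.im / 2) p.2))
      ((volume.restrict UHP).prod ν) := by
      rw [Measure.prod_restrict]
      exact ((continuousOn_circle hf).mono (prod_mono_right (subset_univ _))).aemeasurable
        (measurableSet_UHP.prod measurableSet_Ioc)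
    exact h1.enorm.pow_const 2
  calc ∫⁻ z in UHP, ‖(z.im : ℂ) ^ n * iteratedDeriv n f z‖ₑ ^ 2
      ≤ ∫⁻ z in UHP, (C ^ 2 * ν univ) * (∫⁻ θ, ‖f (circleMap z (z.im / 2) θ)‖ₑ ^ 2 ∂ν) := by
        refine setLIntegral_mono' measurableSet_UHP fun z hz => ?_
        refine (pow_le_pow_left₀ zero_le (enorm_le_circle hf n hz) 2).trans ?_
        rw [mul_pow, mul_assoc]
        gcongr
        apply sq_lintegral_le
        have : ContinuousOn (fun θ : ℝ => f (circleMap z (z.im / 2) θ)) univ :=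
          (continuousOn_circle hf).comp (f := fun θ : ℝ => (z, θ)) (by fun_prop)
            (fun θ _ => ⟨hz, mem_univ _⟩)
        exact ((continuousOn_univ.1 this).measurable.enorm).aemeasurable
    _ = (C ^ 2 * ν univ) * ∫⁻ z in UHP, (∫⁻ θ, ‖f (circleMap z (z.im / 2) θ)‖ₑ ^ 2 ∂ν) := by
        rw [lintegral_const_mul'' _ hm.lintegral_prod_right']
    _ = (C ^ 2 * ν univ) * ∫⁻ θ, (∫⁻ z in UHP, ‖f (circleMap z (z.im / 2) θ)‖ₑ ^ 2) ∂ν := by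
        rw [lintegral_lintegral_swap hm]
    _ ≤ (C ^ 2 * ν univ) * ∫⁻ θ, (2 * ∫⁻ z in UHP, ‖f z‖ₑ ^ 2) ∂ν := by
        gcongr with θ
        exact lintegral_tilt_le (fun z => ‖f z‖ₑ ^ 2) θ
    _ < ∞ := by
        rw [lintegral_const]
        refine ENNReal.mul_lt_top (ENNReal.mul_lt_top (by simp [C]) hν)
          (ENNReal.mul_lt_top (ENNReal.mul_lt_top (by simp) hfin) hν)

/-! ### Integration by parts on the half-plane -/

/-- Integrability of `F y / y` forces both boundary terms of `F` to vanish. The substitution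
`y = exp s` turns this into the corresponding statement on the whole line. -/
lemma integral_deriv_eq_zero_Ioi {F F' : ℝ → ℂ} (hF : ∀ y, 0 < y → HasDerivAt F (F' y) y)
    (hF' : IntegrableOn F' (Ioi 0)) (hint : IntegrableOn (fun y => y⁻¹ • F y) (Ioi 0)) :
    ∫ y in Ioi 0, F' y = 0 := by
  have himg : Real.exp '' univ = Ioi 0 := by rw [image_univ, Real.range_exp]
  have hd : ∀ x ∈ univ, HasDerivWithinAt Real.exp (Real.exp x) univ x :=
    fun x _ => (Real.hasDerivAt_exp x).hasDerivWithinAt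
  have hinj : InjOn Real.exp univ := Real.exp_injective.injOn
  rw [← himg, integrableOn_image_iff_integrableOn_abs_deriv_smul .univ hd hinj,
    integrableOn_univ] at hF' hint
  rw [← himg, integral_image_eq_integral_abs_deriv_smul .univ hd hinj, setIntegral_univ]
  simp only [abs_of_pos (Real.exp_pos _)] at hF' hint ⊢
  refine integral_eq_zero_of_hasDerivAt_of_integrable (f := fun s => F (Real.exp s)) (fun s => ?_)
    hF' ?_
  · exact (hF _ (Real.exp_pos s)).scomp s (Real.hasDerivAt_exp s)
  · refine hint.congr (Filter.Eventually.of_forall fun s => ?_)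
    simp

/-- Cartesian coordinates identify `Π` with `ℝ × (0, ∞)`. -/
lemma measurePreserving_uhp :
    MeasurePreserving Complex.measurableEquivRealProd.symm
      ((volume : Measure ℝ).prod (volume.restrict (Ioi 0))) (volume.restrict UHP) := by
  have h := Complex.volume_preserving_equiv_real_prod.symm.restrict_preimage measurableSet_UHP
  have hpre : Complex.measurableEquivRealProd.symm ⁻¹' UHP = (univ : Set ℝ) ×ˢ Ioi (0 : ℝ) := by
    ext p
    simp [UHP]
  rw [hpre, Measure.volume_eq_prod, ← Measure.prod_restrict, Measure.restrict_univ] at h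
  exact h

lemma integrable_uhp_iff {G : ℂ → ℂ} :
    IntegrableOn G UHP ↔ Integrable (fun p : ℝ × ℝ => G (p.1 + p.2 * I))
      ((volume : Measure ℝ).prod (volume.restrict (Ioi 0))) := by
  rw [IntegrableOn, ← measurePreserving_uhp.integrable_comp_emb
    (MeasurableEquiv.measurableEmbedding _)]
  simp [Function.comp_def, Complex.measurableEquivRealProd_symm_apply, Complex.mk_eq_add_mul_I]

lemma integral_uhp {G : ℂ → ℂ} :
    ∫ z in UHP, G z = ∫ p : ℝ × ℝ, G (p.1 + p.2 * I)
      ∂((volume : Measure ℝ).prod (volume.restrict (Ioi 0))) := by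
  rw [← measurePreserving_uhp.integral_comp (MeasurableEquiv.measurableEmbedding _)]
  simp [Complex.measurableEquivRealProd_symm_apply, Complex.mk_eq_add_mul_I]

/-- The integral over `Π` of `H = ∂ₓ(y E)` vanishes when `H` and `E` are integrable. -/
lemma integral_uhp_eq_zero_of_dx {H E : ℂ → ℂ} (hH : IntegrableOn H UHP) (hE : IntegrableOn E UHP)
    (hd : ∀ x y : ℝ, 0 < y →
      HasDerivAt (fun t : ℝ => (y : ℂ) * E (t + y * I)) (H (x + y * I)) x) :
    ∫ z in UHP, H z = 0 := by
  rw [integrable_uhp_iff] at hH hE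
  rw [integral_uhp, integral_prod_symm _ hH]
  refine integral_eq_zero_of_ae ?_
  filter_upwards [hH.prod_left_ae, hE.prod_left_ae, ae_restrict_mem measurableSet_Ioi]
    with y h1 h2 hy
  exact integral_eq_zero_of_hasDerivAt_of_integrable (fun x => hd x y hy) h1 (h2.const_mul _)

/-- The integral over `Π` of `H = ∂_y(y E)` vanishes when `H` and `E` are integrable: the factor `y`
removes the boundary term on the real axis. -/
lemma integral_uhp_eq_zero_of_dy {H E : ℂ → ℂ} (hH : IntegrableOn H UHP) (hE : IntegrableOn E UHP)
    (hd : ∀ x y : ℝ, 0 < y →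
      HasDerivAt (fun t : ℝ => (t : ℂ) * E (x + t * I)) (H (x + y * I)) y) :
    ∫ z in UHP, H z = 0 := by
  rw [integrable_uhp_iff] at hH hE
  rw [integral_uhp, integral_prod _ hH]
  refine integral_eq_zero_of_ae ?_
  filter_upwards [hH.prod_right_ae, hE.prod_right_ae] with x h1 h2
  refine integral_deriv_eq_zero_Ioi (hd x) h1 (IntegrableOn.congr_fun h2 (fun y hy => ?_)
    measurableSet_Ioi)
  have : (y : ℂ) ≠ 0 := by exact_mod_cast (ne_of_gt hy)
  simp [this]

/-! ### Pairings of weighted derivatives -/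

lemma hasDerivAt_mul_mul_conj {w g h : ℝ → ℂ} {w' g' h' : ℂ} {t : ℝ} (hw : HasDerivAt w w' t)
    (hg : HasDerivAt g g' t) (hh : HasDerivAt h h' t) :
    HasDerivAt (fun s => w s * (g s * (starRingEnd ℂ) (h s)))
      (w' * (g t * (starRingEnd ℂ) (h t)) +
        w t * (g' * (starRingEnd ℂ) (h t) + g t * (starRingEnd ℂ) h')) t :=
  hw.mul (hg.mul hh.star)

lemma hasDerivAt_ofReal_pow (n : ℕ) (t : ℝ) :
    HasDerivAt (fun s : ℝ => (s : ℂ) ^ (n + 1)) ((n + 1 : ℂ) * (t : ℂ) ^ n) t := by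
  simpa using (Complex.ofRealCLM.hasDerivAt (x := t)).fun_pow (n + 1)

/-- The weighted derivative `y ^ n * f⁽ⁿ⁾(z)`, where `y = Im z`. -/
def wderiv (f : ℂ → ℂ) (n : ℕ) (z : ℂ) : ℂ := (z.im : ℂ) ^ n * iteratedDeriv n f z

/-- The `L²(Π)` pairing of two weighted derivatives. -/
def pairing (f : ℂ → ℂ) (k l : ℕ) : ℂ :=
  ∫ z in UHP, wderiv f k z * (starRingEnd ℂ) (wderiv f l z)

section
variable {f : ℂ → ℂ} (hf : DifferentiableOn ℂ f UHP)
  (hf2 : IntegrableOn (fun z => ‖f z‖ ^ 2) UHP volume)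
include hf

lemma hasDerivAt_horizontal (n : ℕ) (x : ℝ) {y : ℝ} (hy : 0 < y) :
    HasDerivAt (fun t : ℝ => iteratedDeriv n f (t + y * I))
      (iteratedDeriv (n + 1) f (x + y * I)) x := by
  have hz : (x + y * I : ℂ) ∈ UHP := by simpa [UHP] using hy
  have := (hasDerivAt_iteratedDeriv hf n hz).comp x
    ((Complex.ofRealCLM.hasDerivAt (x := x)).add_const (y * I : ℂ))
  simpa [Function.comp_def] using this

lemma hasDerivAt_vertical (n : ℕ) (x : ℝ) {y : ℝ} (hy : 0 < y) :
    HasDerivAt (fun t : ℝ => iteratedDeriv n f (x + t * I))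
      (iteratedDeriv (n + 1) f (x + y * I) * I) y := by
  have hz : (x + y * I : ℂ) ∈ UHP := by simpa [UHP] using hy
  have := (hasDerivAt_iteratedDeriv hf n hz).comp y
    (((Complex.ofRealCLM.hasDerivAt (x := y)).mul_const I).const_add (x : ℂ))
  simpa [Function.comp_def] using this

include hf2

lemma integrable_pairing (k l : ℕ) :
    IntegrableOn (fun z => wderiv f k z * (starRingEnd ℂ) (wderiv f l z)) UHP :=
  (memLp_weighted hf hf2 k).integrable_mul (memLp_weighted hf hf2 l).star

/-- Integration of `∂ₓ(y φ_k conj φ_l)`, where `φ_n = wderiv f n`. -/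
lemma pairing_succ_add (k l : ℕ) : pairing f (k + 1) l + pairing f k (l + 1) = 0 := by
  have h1 := integrable_pairing hf hf2 (k + 1) l
  have h2 := integrable_pairing hf hf2 k (l + 1)
  rw [pairing, pairing, ← integral_add h1 h2]
  refine integral_uhp_eq_zero_of_dx (h1.add h2) (integrable_pairing hf hf2 k l) fun x y hy => ?_
  refine ((hasDerivAt_mul_mul_conj (hasDerivAt_const x ((y : ℂ) ^ (k + l + 1)))
    (hasDerivAt_horizontal hf k x hy) (hasDerivAt_horizontal hf l x hy)).congr_deriv
      ?_).congr_of_eventuallyEq (Filter.Eventually.of_forall fun t => ?_)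
  · simp [wderiv]
    ring
  · simp [wderiv]
    ring

/-- Integration of `∂_y(y φ_k conj φ_l)`, where `φ_n = wderiv f n`. -/
lemma pairing_euler (k l : ℕ) :
    (k + l + 1) * pairing f k l + I * pairing f (k + 1) l - I * pairing f k (l + 1) = 0 := by
  have h0 := (integrable_pairing hf hf2 k l).const_mul (k + l + 1 : ℂ)
  have h1 := (integrable_pairing hf hf2 (k + 1) l).const_mul I
  have h2 := (integrable_pairing hf hf2 k (l + 1)).const_mul I
  rw [pairing, pairing, pairing, ← integral_const_mul, ← integral_const_mul, ← integral_const_mul,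
    ← integral_add h0 h1]
  refine (integral_sub (h0.add h1) h2).symm.trans ?_
  refine integral_uhp_eq_zero_of_dy ((h0.add h1).sub h2) (integrable_pairing hf hf2 k l)
    fun x y hy => ?_
  refine ((hasDerivAt_mul_mul_conj (hasDerivAt_ofReal_pow (k + l) y)
    (hasDerivAt_vertical hf k x hy) (hasDerivAt_vertical hf l x hy)).congr_deriv
      ?_).congr_of_eventuallyEq (Filter.Eventually.of_forall fun t => ?_)
  · simp [wderiv]
    ring
  · simp [wderiv]
    ring

/-- All pairings are explicit multiples of `pairing f 0 0 = ‖f‖²`. -/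
lemma pairing_eq (k l : ℕ) :
    (2 * I) ^ k * (-(2 * I)) ^ l * pairing f k l =
      (-1) ^ (k + l) * (k + l).factorial * pairing f 0 0 := by
  have step1 (k l : ℕ) : 2 * I * pairing f (k + 1) l = -(k + l + 1) * pairing f k l := by
    linear_combination pairing_euler hf hf2 k l + I * pairing_succ_add hf hf2 k l
  have step2 (k l : ℕ) : -(2 * I) * pairing f k (l + 1) = -(k + l + 1) * pairing f k l := by
    linear_combination pairing_euler hf hf2 k l - I * pairing_succ_add hf hf2 k l
  induction k with
  | zero =>
    induction l with
    | zero => simp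
    | succ l ih =>
      have := step2 0 l
      rw [zero_add] at ih ⊢
      rw [Nat.factorial_succ]
      push_cast at this ⊢
      linear_combination (-(2 * I)) ^ l * this - (l + 1 : ℂ) * ih
  | succ k ih =>
    have := step1 k l
    rw [show k + 1 + l = k + l + 1 by ring, Nat.factorial_succ]
    push_cast at this ⊢
    linear_combination (2 * I) ^ k * (-(2 * I)) ^ l * this - (k + l + 1 : ℂ) * ih

end

/-! ### The Laguerre normalization -/

/-- The sum is the `j`-th forward difference of `x ↦ C(x, k)` at `x = k`. -/
lemma sum_choose_alternating (j k : ℕ) (hk : k ≤ j) :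
    ∑ l ∈ Finset.range (j + 1), (-1 : ℤ) ^ (j - l) * j.choose l * (k + l).choose k
      = if k = j then 1 else 0 := by
  have h := fwdDiff_iter_eq_sum_shift (1 : ℕ) (fun x => x.choose k : ℕ → ℤ) j k
  simp only [smul_eq_mul, mul_one] at h
  rw [← h]
  obtain ⟨m, rfl⟩ := Nat.exists_eq_add_of_le hk
  have h0 := fwdDiff_iter_choose 0 k
  rw [add_zero] at h0
  rw [add_comm k m, Function.iterate_add_apply, h0]
  cases m with
  | zero => simp
  | succ m =>
    simp_rw [Nat.choose_zero_right, Function.iterate_succ_apply, Nat.cast_one, fwdDiff_const,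
      fwdDiff_iter_eq_sum_shift, smul_zero, Finset.sum_const_zero]
    simp

/-- The squared norm of the `j`-th Laguerre polynomial `∑ l, C(j,l) (-x)^l / l!` in
`L²((0,∞), e^{-x} dx)` is `1`, written out with `∫ x^n e^{-x} dx = n!`. -/
lemma laguerre_sum (j : ℕ) :
    ∑ k ∈ Finset.range (j + 1), ∑ l ∈ Finset.range (j + 1),
      (j.choose k / k.factorial : ℂ) * (j.choose l / l.factorial) *
        ((-1) ^ (k + l) * (k + l).factorial) = 1 := by
  have h1 : ∀ k ∈ Finset.range (j + 1), ∑ l ∈ Finset.range (j + 1),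
      (j.choose k / k.factorial : ℂ) * (j.choose l / l.factorial) *
        ((-1) ^ (k + l) * (k + l).factorial) = if k = j then 1 else 0 := by
    intro k hk
    have hkj : k ≤ j := Nat.lt_succ_iff.1 (Finset.mem_range.1 hk)
    have h := congrArg (Int.cast : ℤ → ℂ) (sum_choose_alternating j k hkj)
    push_cast at h
    trans (j.choose k : ℂ) * (-1) ^ (k + j) * (if k = j then 1 else 0)
    · rw [← h, Finset.mul_sum]
      refine Finset.sum_congr rfl fun l hl => ?_
      have hlj : l ≤ j := Nat.lt_succ_iff.1 (Finset.mem_range.1 hl)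
      have hch : ((k + l).choose k : ℂ) * k.factorial * l.factorial = (k + l).factorial := by
        rw [Nat.choose_symm_add]
        exact_mod_cast Nat.add_choose_mul_factorial_mul_factorial k l
      have hs : (-1 : ℂ) ^ (k + j) * (-1) ^ (j - l) = (-1) ^ (k + l) := by
        obtain ⟨m, rfl⟩ := Nat.exists_eq_add_of_le hlj
        rw [Nat.add_sub_cancel_left, ← pow_add, show k + (l + m) + m = k + l + 2 * m by ring, pow_add,
          pow_mul]
        simp
      have hk0 : (k.factorial : ℂ) ≠ 0 := by exact_mod_cast k.factorial_ne_zero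
      have hl0 : (l.factorial : ℂ) ≠ 0 := by exact_mod_cast l.factorial_ne_zero
      rw [← hch, ← hs]
      field_simp
    · split_ifs with hkj'
      · subst hkj'
        simp [← two_mul, pow_mul]
      · simp
  rw [Finset.sum_congr rfl h1]
  simp

/-! ### The isometry -/

lemma creationPow_eq (j : ℕ) (f : ℂ → ℂ) (z : ℂ) : creationPow j f z =
    ∑ l ∈ Finset.range (j + 1), (j.choose l / l.factorial * (2 * I) ^ l : ℂ) * wderiv f l z := by
  refine Finset.sum_congr rfl fun l _ => ?_
  have : z - (starRingEnd ℂ) z = 2 * I * z.im := by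
    rw [Complex.sub_conj]; push_cast; ring
  rw [this, wderiv, mul_pow]
  ring

lemma lintegral_eq_ofReal {g : ℂ → ℂ} (hg : MemLp g 2 (volume.restrict UHP)) :
    ∫⁻ z in UHP, (‖g z‖₊ : ℝ≥0∞) ^ 2
      = ENNReal.ofReal (∫ z in UHP, g z * (starRingEnd ℂ) (g z)).re := by
  have h1 : ∀ z, g z * (starRingEnd ℂ) (g z) = ((‖g z‖ ^ 2 : ℝ) : ℂ) := fun z => by
    rw [Complex.mul_conj']; push_cast; rfl
  simp_rw [h1]
  rw [integral_complex_ofReal, Complex.ofReal_re, ofReal_integral_eq_lintegral_ofReal]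
  · refine lintegral_congr fun z => ?_
    rw [ENNReal.ofReal_pow (norm_nonneg _), ofReal_norm, enorm_eq_nnnorm]
  · exact hg.integrable_norm_pow (by norm_num)
  · exact Filter.Eventually.of_forall fun z => by positivity

/-- `S_Π^j` is an isometry from the Bergman space `A²(Π)` onto the true polyanalytic Bergman
space `A_(j+1)`: `‖S_Π^j f‖_{L²(Π)} = ‖f‖_{L²(Π)}`. -/
theorem creationPow_isometry (j : ℕ) (f : ℂ → ℂ)
    (hf : DifferentiableOn ℂ f UHP)
    (hf2 : IntegrableOn (fun z => ‖f z‖ ^ 2) UHP volume) :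
    ∫⁻ z in UHP, (‖creationPow j f z‖₊ : ℝ≥0∞) ^ 2
      = ∫⁻ z in UHP, (‖f z‖₊ : ℝ≥0∞) ^ 2 := by
  have hw (n : ℕ) : MemLp (wderiv f n) 2 (volume.restrict UHP) := memLp_weighted hf hf2 n
  have hw0 : wderiv f 0 = f := by funext z; simp [wderiv]
  have hS : MemLp (creationPow j f) 2 (volume.restrict UHP) := by
    rw [funext (creationPow_eq j f)]
    exact memLp_finsetSum _ fun l _ => (hw l).const_mul _
  rw [lintegral_eq_ofReal hS, lintegral_eq_ofReal (hw0 ▸ hw 0)]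
  congr 2
  have hint (k l : ℕ) := integrable_pairing hf hf2 k l
  set c : ℕ → ℂ := fun l => j.choose l / l.factorial * (2 * I) ^ l with hc
  calc ∫ z in UHP, creationPow j f z * (starRingEnd ℂ) (creationPow j f z)
      = ∫ z in UHP, ∑ k ∈ Finset.range (j + 1), ∑ l ∈ Finset.range (j + 1),
          c k * (starRingEnd ℂ) (c l) * (wderiv f k z * (starRingEnd ℂ) (wderiv f l z)) := by
        refine integral_congr_ae (Filter.Eventually.of_forall fun z => ?_)
        simp only [creationPow_eq, map_sum, Finset.sum_mul_sum, map_mul]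
        refine Finset.sum_congr rfl fun k _ => Finset.sum_congr rfl fun l _ => ?_
        simp only [hc, map_mul]
        ring
    _ = ∑ k ∈ Finset.range (j + 1), ∑ l ∈ Finset.range (j + 1),
          c k * (starRingEnd ℂ) (c l) * pairing f k l := by
        rw [integral_finsetSum _ fun k _ => integrable_finsetSum _ fun l _ =>
          (hint k l).const_mul _]
        refine Finset.sum_congr rfl fun k _ => ?_
        rw [integral_finsetSum _ fun l _ => (hint k l).const_mul _]
        exact Finset.sum_congr rfl fun l _ => integral_const_mul _ _
    _ = (∑ k ∈ Finset.range (j + 1), ∑ l ∈ Finset.range (j + 1),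
      (j.choose k / k.factorial : ℂ) * (j.choose l / l.factorial) *
        ((-1) ^ (k + l) * (k + l).factorial)) * pairing f 0 0 := by
        simp only [Finset.sum_mul]
        refine Finset.sum_congr rfl fun k _ => Finset.sum_congr rfl fun l _ => ?_
        have : (starRingEnd ℂ) (c l) = j.choose l / l.factorial * (-(2 * I)) ^ l := by
          simp [hc, Complex.conj_ofNat]
        rw [this]
        linear_combination (j.choose k / k.factorial : ℂ) * (j.choose l / l.factorial) *
          pairing_eq hf hf2 k l
    _ = ∫ z in UHP, f z * (starRingEnd ℂ) (f z) := by
        rw [laguerre_sum, one_mul, pairing, hw0]
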